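/- arXiv:2311.04136 — 2 statements merged into one kernel-verified Lean document; each statement's English description precedes it below -/
import Mathlib

section
/- Let S = K[x_1,…,x_n] be a standard graded polynomial ring over a field K of prime characteristic p, let I ⊂ S be a proper nonzero graded ideal, and let 𝔭 ∈ Ass(I) be an associated prime minimally generated by homogeneous elements g_1,…,g_m. Then for all q = p^e > 1, v(I^{[q]}) ≤ q·v_𝔭(I) + (q−1)·Σ_{i=1}^m deg g_i. -/
/-!
Frobenius is flat on a polynomial ring over a field: `S` is free over the image of
`x_i ↦ x_i ^ q` on the monomials with exponents below `q`, and field extensions are flat. Colons by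
an element therefore commute with Frobenius powers. Writing `𝔭 = I : f` with `f` homogeneous of
degree `v_𝔭(I)`, this gives `I^{[q]} : f ^ q = 𝔭^{[q]}`, and it also shows that `𝔭^{[q]}` is
`𝔭`-primary. As `g_i ^ q ∈ 𝔭^{[q]}`, there is a product `h = ∏ g_i ^ a_i` outside `𝔭^{[q]}` with `a`
maximal, so `a_i ≤ q - 1`; every `g_i` multiplies `h` into `𝔭^{[q]}`, whence `𝔭^{[q]} : h = 𝔭` by
primariness. Thus `I^{[q]} : f ^ q h = 𝔭`, and the degree of `f ^ q h` is at most the asserted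
bound.
-/

open MvPolynomial

attribute [local instance] MvPolynomial.gradedAlgebra

noncomputable section

variable {K : Type*} [Field K] {n : ℕ}

/-- The `q`-th Frobenius power `I^{[q]}` of an ideal. -/
def frobPow (I : Ideal (MvPolynomial (Fin n) K)) (q : ℕ) : Ideal (MvPolynomial (Fin n) K) :=
  Ideal.span ((fun a => a ^ q) '' (I : Set (MvPolynomial (Fin n) K)))

/-- The associated primes of `S/I`. -/
def Ass (I : Ideal (MvPolynomial (Fin n) K)) : Set (Ideal (MvPolynomial (Fin n) K)) :=
  associatedPrimes (MvPolynomial (Fin n) K) (MvPolynomial (Fin n) K ⧸ I)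

/-- The v-number of a graded ideal. -/
def vnum (I : Ideal (MvPolynomial (Fin n) K)) : ℕ :=
  sInf {d : ℕ | ∃ f : MvPolynomial (Fin n) K, f.IsHomogeneous d ∧
    ∃ 𝔭 ∈ Ass I, I.colon (Ideal.span {f}) = 𝔭}

/-- The local v-number `v_𝔭(I)`. -/
def vnumLocal (I 𝔭 : Ideal (MvPolynomial (Fin n) K)) : ℕ :=
  sInf {d : ℕ | ∃ f : MvPolynomial (Fin n) K, f.IsHomogeneous d ∧
    I.colon (Ideal.span {f}) = 𝔭}

/-- The invariant `α_q(I)`. -/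
def alphaq (I : Ideal (MvPolynomial (Fin n) K)) (q : ℕ) : ℕ :=
  sInf {d : ℕ | ∃ f : MvPolynomial (Fin n) K, f.IsHomogeneous d ∧
    f ∈ (frobPow I q).colon I ∧ f ∉ frobPow I q}

/-- The height of an ideal: the minimal height of an associated prime. -/
def heightI (I : Ideal (MvPolynomial (Fin n) K)) : ℕ :=
  sInf {h : ℕ | ∃ 𝔭 ∈ Ass I, ∃ h𝔭 : 𝔭.IsPrime,
    Order.height (⟨𝔭, h𝔭⟩ : PrimeSpectrum (MvPolynomial (Fin n) K)) = (h : ℕ∞)}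

/-- The big height of an ideal: the maximal height of an associated prime. -/
def bightI (I : Ideal (MvPolynomial (Fin n) K)) : ℕ :=
  sSup {h : ℕ | ∃ 𝔭 ∈ Ass I, ∃ h𝔭 : 𝔭.IsPrime,
    Order.height (⟨𝔭, h𝔭⟩ : PrimeSpectrum (MvPolynomial (Fin n) K)) = (h : ℕ∞)}

/-- A graded (homogeneous) ideal with respect to the standard grading. -/
def IsGraded (I : Ideal (MvPolynomial (Fin n) K)) : Prop :=
  Ideal.IsHomogeneous (homogeneousSubmodule (Fin n) K) I

/-- A monomial ideal. -/
def IsMonomialIdeal (I : Ideal (MvPolynomial (Fin n) K)) : Prop :=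
  ∃ s : Set (Fin n →₀ ℕ), I = Ideal.span ((fun a => monomial a (1 : K)) '' s)

section Flat

variable {R S : Type*} [CommRing R] [CommRing S]

theorem mem_colon_smul_top_of_flat {M : Type*} [AddCommGroup M] [Module R M] [Module.Flat R M]
    {I : Ideal R} {u : R} {x : M} (hx : u • x ∈ I • (⊤ : Submodule R M)) :
    x ∈ I.colon {u} • (⊤ : Submodule R M) := by
  rw [← Submodule.span_univ, ← Set.range_id, Submodule.mem_ideal_smul_span_iff_exists_sum] at hx
  obtain ⟨a, ha, hsum⟩ := hx
  let coeff : Option a.support → R := fun i => i.elim u fun y => -a y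
  let vector : Option a.support → M := fun i => i.elim x fun y => y
  have relation : ∑ i, coeff i • vector i = 0 := by
    simp only [coeff, vector, Fintype.sum_option, Option.elim, neg_smul, Finset.sum_neg_distrib]
    rw [Finset.sum_coe_sort a.support fun y => a y • y, ← hsum, Finsupp.sum]
    simp only [id_eq, add_neg_cancel]
  obtain ⟨k, c, y, vector_eq, coeff_eq⟩ :=
    Module.Flat.isTrivialRelation_of_sum_smul_eq_zero relation
  have c_mem (j) : c none j ∈ I.colon {u} := by
    have c_none_eq := coeff_eq j
    simp only [coeff, Fintype.sum_option, Option.elim, neg_mul, Finset.sum_neg_distrib,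
      add_neg_eq_zero] at c_none_eq
    rw [Submodule.mem_colon_singleton, smul_eq_mul, mul_comm, c_none_eq]
    exact Ideal.sum_mem _ fun i _ => I.mul_mem_right _ (ha i)
  rw [show x = ∑ j, c none j • y j from vector_eq none]
  exact Submodule.sum_mem _ fun j _ => Submodule.smul_mem_smul (c_mem j) Submodule.mem_top

theorem map_colon_singleton_of_flat {φ : R →+* S} (hφ : φ.Flat) (I : Ideal R) (u : R) :
    (I.colon {u}).map φ = (I.map φ).colon {φ u} := by
  algebraize [φ]
  refine le_antisymm (Ideal.map_le_iff_le_comap.2 fun r hr => ?_) fun s hs => ?_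
  · rw [Submodule.mem_colon_singleton] at hr
    rw [Ideal.mem_comap, Submodule.mem_colon_singleton, smul_eq_mul, ← map_mul]
    exact Ideal.mem_map_of_mem φ hr
  · have smul_mem : u • s ∈ I • (⊤ : Submodule R S) := by
      rw [Ideal.smul_top_eq_map, Algebra.smul_def, mul_comm]
      exact Submodule.mem_colon_singleton.1 hs
    have := mem_colon_smul_top_of_flat smul_mem
    rwa [Ideal.smul_top_eq_map] at this

theorem flat_of_addEquiv_finsupp {φ : R →+* S} {ι : Type*} (E : S ≃+ (ι →₀ R))
    (hE : ∀ r s, E (φ r * s) = r • E s) : φ.Flat := by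
  algebraize [φ]
  exact Module.Flat.of_linearEquiv (E.toLinearEquiv hE)

end Flat

section PolynomialRing

variable {σ R S : Type*} [CommRing R] [CommRing S]

theorem flat_mvPolynomial_map {φ : R →+* S} (hφ : φ.Flat) :
    (MvPolynomial.map φ : MvPolynomial σ R →+* MvPolynomial σ S).Flat := by
  algebraize [φ]
  let _ := MvPolynomial.algebraMvPolynomial (R := R) (S := S) (σ := σ)
  exact RingHom.flat_algebraMap_iff.2 <| Module.Flat.isBaseChange R (MvPolynomial σ R) S
      (MvPolynomial σ S) (Algebra.IsPushout.out (R := R) (S := MvPolynomial σ R) (R' := S))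

/-- Division with remainder by `q` in every exponent: `m` is sent to the pair `(r, d)` with
`m = q • d + r` and all entries of the remainder `r` less than `q`. -/
def divModEquiv (σ : Type*) {q : ℕ} (hq : q ≠ 0) :
    (σ →₀ ℕ) ≃ {r : σ →₀ ℕ // ∀ i, r i < q} × (σ →₀ ℕ) where
  toFun m := (⟨m.mapRange (· % q) (Nat.zero_mod q), fun i => Nat.mod_lt (m i) (by omega)⟩,
    m.mapRange (· / q) (Nat.zero_div q))
  invFun x := q • x.2 + x.1
  left_inv m := by
    ext i
    simp [Nat.div_add_mod]
  right_inv x := by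
    ext i
    · simp [Nat.mod_eq_of_lt (x.1.2 i)]
    · simp [Nat.mul_add_div hq.bot_lt, Nat.div_eq_of_lt (x.1.2 i)]

theorem divModEquiv_smul_add {q : ℕ} (hq : q ≠ 0) (d m : σ →₀ ℕ) :
    divModEquiv σ hq (q • d + m) = ((divModEquiv σ hq m).1, d + (divModEquiv σ hq m).2) := by
  ext i
  · simp [divModEquiv]
  · simp [divModEquiv, Nat.mul_add_div hq.bot_lt]

section Expand

variable {σ R : Type*} [CommSemiring R]

variable (σ R) in
/-- The decomposition of the polynomial ring as the free module, over its subring of polynomials in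
the `x_i ^ q`, on the monomials whose exponents are all less than `q`. The coefficients are taken in
the polynomial ring itself, which acts through `MvPolynomial.expand q`
(see `expandDecomposition_expand_mul`). -/
def expandDecomposition {q : ℕ} (hq : q ≠ 0) :
    MvPolynomial σ R ≃ₗ[R] ({r : σ →₀ ℕ // ∀ i, r i < q} →₀ MvPolynomial σ R) :=
  (basisMonomials σ R).repr ≪≫ₗ Finsupp.domLCongr (divModEquiv σ hq) ≪≫ₗ
    Finsupp.curryLinearEquiv R ≪≫ₗ Finsupp.mapRange.linearEquiv (basisMonomials σ R).repr.symm

theorem expandDecomposition_monomial {q : ℕ} (hq : q ≠ 0) (m : σ →₀ ℕ) (c : R) :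
    expandDecomposition σ R hq (monomial m c) =
      Finsupp.single (divModEquiv σ hq m).1 (monomial (divModEquiv σ hq m).2 c) := by
  have repr_monomial : (basisMonomials σ R).repr (monomial m c) = Finsupp.single m c := rfl
  have repr_symm_single (d : σ →₀ ℕ) :
      (basisMonomials σ R).repr.symm (Finsupp.single d c) = monomial d c := rfl
  simp only [expandDecomposition, LinearEquiv.trans_apply, repr_monomial, Finsupp.domLCongr_single,
    Finsupp.curryLinearEquiv_apply, Finsupp.curry_single, Finsupp.mapRange.linearEquiv_apply,
    Finsupp.mapRange_single, repr_symm_single]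

theorem expandDecomposition_expand_mul {q : ℕ} (hq : q ≠ 0) (f s : MvPolynomial σ R) :
    expandDecomposition σ R hq (expand q f * s) = f • expandDecomposition σ R hq s := by
  induction f using MvPolynomial.induction_on' with
  | monomial d a =>
    induction s using MvPolynomial.induction_on' with
    | monomial m c =>
      rw [expand_monomial, monomial_mul, expandDecomposition_monomial, divModEquiv_smul_add,
        expandDecomposition_monomial, Finsupp.smul_single, smul_eq_mul, monomial_mul]
    | add s t hs ht => rw [mul_add, map_add, map_add, smul_add, hs, ht]
  | add f g hf hg => rw [map_add, add_mul, map_add, add_smul, hf, hg]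

end Expand

theorem flat_expand {q : ℕ} (hq : q ≠ 0) :
    (expand q : MvPolynomial σ R →ₐ[R] MvPolynomial σ R).toRingHom.Flat :=
  flat_of_addEquiv_finsupp (expandDecomposition σ R hq).toAddEquiv
    (expandDecomposition_expand_mul hq)

theorem flat_iterateFrobenius_mvPolynomial (p e : ℕ) [ExpChar R p]
    (hR : (iterateFrobenius R p e).Flat) :
    (iterateFrobenius (MvPolynomial σ R) p e).Flat := by
  have factorization : iterateFrobenius (MvPolynomial σ R) p e =
      (MvPolynomial.map (iterateFrobenius R p e)).comp
        (expand (p ^ e) : MvPolynomial σ R →ₐ[R] MvPolynomial σ R).toRingHom :=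
    RingHom.ext fun f => (map_iterateFrobenius_expand p f e).symm
  rw [factorization]
  exact (flat_expand (expChar_pow_pos R p e).ne').comp (flat_mvPolynomial_map hR)

end PolynomialRing

theorem isAssociatedPrime_quotient_iff {R : Type*} [CommRing R] [IsNoetherianRing R]
    {I P : Ideal R} :
    IsAssociatedPrime P (R ⧸ I) ↔ P.IsPrime ∧ ∃ f : R, I.colon {f} = P := by
  have colon_mk (f : R) :
      (⊥ : Submodule R (R ⧸ I)).colon {Ideal.Quotient.mk I f} = I.colon {f} := by
    ext r
    rw [Submodule.mem_colon_singleton, Submodule.mem_colon_singleton, Submodule.mem_bot,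
      smul_eq_mul, ← Ideal.Quotient.eq_zero_iff_mem]
    rfl
  simp only [isAssociatedPrime_iff, Ideal.Quotient.mk_surjective.exists, colon_mk, eq_comm]

section PrimaryIdeal

variable {R : Type*} [CommSemiring R]

theorem colon_singleton_mul (I : Ideal R) (a b : R) :
    I.colon {a * b} = (I.colon {a}).colon {b} := by
  ext r
  simp only [Submodule.mem_colon_singleton, smul_eq_mul, mul_assoc, mul_comm b a]

theorem exists_maximal_prod_pow_notMem {ι : Type*} [Fintype ι] {J : Ideal R} (hJ : J ≠ ⊤)
    {g : ι → R} {N : ι → ℕ} (hg : ∀ i, g i ^ N i ∈ J) :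
    ∃ a : ι → ℕ, (∀ i, a i < N i) ∧ ∏ i, g i ^ a i ∉ J ∧ ∀ j, g j * ∏ i, g i ^ a i ∈ J := by
  classical
  let T : Set (ι → ℕ) := {a | ∏ i, g i ^ a i ∉ J}
  have lt_of_mem {a} (ha : a ∈ T) (i : ι) : a i < N i := by
    by_contra! hi
    refine ha (J.mem_of_dvd (Finset.dvd_prod_of_mem _ (Finset.mem_univ i)) ?_)
    exact J.mem_of_dvd (pow_dvd_pow _ hi) (hg i)
  have T_finite : T.Finite := (Set.finite_Iic N).subset fun a ha i => (lt_of_mem ha i).le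
  have T_nonempty : T.Nonempty := ⟨0, by simpa [T] using J.ne_top_iff_one.1 hJ⟩
  obtain ⟨a, haT, a_max⟩ := T_finite.exists_maximal T_nonempty
  refine ⟨a, lt_of_mem haT, haT, fun j => ?_⟩
  by_contra hj
  have prod_single : ∏ i, g i ^ (Pi.single j 1 : ι → ℕ) i = g j := by
    simp [Pi.single_apply, pow_ite]
  have prod_succ : ∏ i, g i ^ (a + Pi.single j 1 : ι → ℕ) i = g j * ∏ i, g i ^ a i := by
    simp only [Pi.add_apply, pow_add, Finset.prod_mul_distrib, prod_single, mul_comm]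
  have succ_mem : a + Pi.single j 1 ∈ T := by rwa [Set.mem_ofPred_eq, prod_succ]
  simpa using a_max succ_mem le_self_add j

theorem exists_colon_prod_pow_eq_radical {ι : Type*} [Fintype ι] {Q : Ideal R} (hQ : Q.IsPrimary)
    {g : ι → R} (hspan : Q.radical = Ideal.span (Set.range g)) {N : ι → ℕ}
    (hg : ∀ i, g i ^ N i ∈ Q) :
    ∃ a : ι → ℕ, (∀ i, a i < N i) ∧ Q.colon {∏ i, g i ^ a i} = Q.radical := by
  obtain ⟨hQtop, mem_or_mem⟩ := Ideal.isPrimary_iff.1 hQ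
  obtain ⟨a, ha, prod_notMem, mul_prod_mem⟩ := exists_maximal_prod_pow_notMem hQtop hg
  refine ⟨a, ha, le_antisymm (fun r hr => ?_) ?_⟩
  · rw [Submodule.mem_colon_singleton, smul_eq_mul, mul_comm] at hr
    exact (mem_or_mem hr).resolve_left prod_notMem
  · rw [hspan, Ideal.span_le, Set.range_subset_iff]
    exact fun j => Submodule.mem_colon_singleton.2 (mul_prod_mem j)

end PrimaryIdeal

section Frobenius

theorem radical_map_iterateFrobenius {R : Type*} [CommSemiring R] (p e : ℕ) [ExpChar R p]
    (I : Ideal R) : (I.map (iterateFrobenius R p e)).radical = I.radical := by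
  refine le_antisymm (Ideal.radical_mono (Ideal.map_le_iff_le_comap.2 fun a ha => ?_))
    (Ideal.radical_le_radical_iff.2 fun a ha => ⟨p ^ e, ?_⟩)
  · exact Ideal.pow_mem_of_mem I ha _ (expChar_pow_pos R p e)
  · exact Ideal.mem_map_of_mem (iterateFrobenius R p e) ha

variable {R : Type*} [CommRing R] {p e : ℕ} [ExpChar R p]

theorem isPrimary_map_iterateFrobenius (hF : (iterateFrobenius R p e).Flat) (P : Ideal R)
    [hP : P.IsPrime] : (P.map (iterateFrobenius R p e)).IsPrimary := by
  have radical_eq : (P.map (iterateFrobenius R p e)).radical = P := by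
    rw [radical_map_iterateFrobenius, hP.radical]
  refine Ideal.isPrimary_iff.2 ⟨fun htop => hP.ne_top ?_, fun {x y} hxy => ?_⟩
  · rw [← radical_eq, htop, Ideal.radical_top]
  · rw [radical_eq, or_iff_not_imp_right]
    intro hy
    have colon_eq : P.colon {y} = P := by
      ext r
      simp [Submodule.mem_colon_singleton, hP.mul_mem_iff_mem_or_mem, hy]
    rw [← colon_eq, map_colon_singleton_of_flat hF, Submodule.mem_colon_singleton, smul_eq_mul,
      iterateFrobenius_def]
    exact Ideal.mem_of_dvd _ (mul_dvd_mul_left x (dvd_pow_self y (expChar_pow_pos R p e).ne')) hxy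

theorem exists_map_iterateFrobenius_colon_eq (hF : (iterateFrobenius R p e).Flat) {ι : Type*}
    [Fintype ι] {I P : Ideal R} [hP : P.IsPrime] {f : R} (hf : I.colon {f} = P) {g : ι → R}
    (hg : P = Ideal.span (Set.range g)) :
    ∃ a : ι → ℕ, (∀ i, a i < p ^ e) ∧
      (I.map (iterateFrobenius R p e)).colon {f ^ p ^ e * ∏ i, g i ^ a i} = P := by
  have radical_eq : (P.map (iterateFrobenius R p e)).radical = P := by
    rw [radical_map_iterateFrobenius, hP.radical]
  have pow_mem (i : ι) : g i ^ p ^ e ∈ P.map (iterateFrobenius R p e) :=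
    Ideal.mem_map_of_mem (iterateFrobenius R p e) (hg ▸ Ideal.subset_span ⟨i, rfl⟩)
  obtain ⟨a, ha, hcolon⟩ := exists_colon_prod_pow_eq_radical
    (isPrimary_map_iterateFrobenius hF P) (radical_eq.trans hg) pow_mem
  refine ⟨a, ha, ?_⟩
  rw [colon_singleton_mul, ← iterateFrobenius_def, ← map_colon_singleton_of_flat hF, hf, hcolon,
    radical_eq]

end Frobenius

section Graded

variable {ι R σ : Type*} [DecidableEq ι] [AddLeftCancelMonoid ι] [CommRing R] [SetLike σ R]
  [AddSubmonoidClass σ R] {𝒜 : ι → σ} [GradedRing 𝒜]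

open DirectSum in
theorem exists_colon_decompose_eq {I P : Ideal R} (hI : I.IsHomogeneous 𝒜)
    (hP : P.IsHomogeneous 𝒜) [hprime : P.IsPrime] {f : R} (hf : I.colon {f} = P) :
    ∃ d, I.colon {(decompose 𝒜 f d : R)} = P := by
  classical
  have le_colon_component (d : ι) : P ≤ I.colon {(decompose 𝒜 f d : R)} := by
    obtain ⟨s, hs⟩ := (Ideal.IsHomogeneous.iff_exists 𝒜 P).1 hP
    rw [hs, Ideal.span_le]
    rintro _ ⟨⟨r, i, hr⟩, hrs, rfl⟩
    have mul_mem : r * f ∈ I := by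
      rw [← smul_eq_mul, ← Submodule.mem_colon_singleton, hf, hs]
      exact Ideal.subset_span ⟨_, hrs, rfl⟩
    rw [SetLike.mem_coe, Submodule.mem_colon_singleton, smul_eq_mul,
      ← coe_decompose_mul_add_of_left_mem 𝒜 hr]
    exact hI _ mul_mem
  have inf_colon_component_le :
      (decompose 𝒜 f).support.inf (fun d => I.colon {(decompose 𝒜 f d : R)}) ≤ P := by
    intro r hr
    rw [← hf, Submodule.mem_colon_singleton, smul_eq_mul, ← sum_support_decompose 𝒜 f,
      Finset.mul_sum]
    exact Ideal.sum_mem _ fun d hd =>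
      Submodule.mem_colon_singleton.1 (Submodule.mem_finsetInf.1 hr d hd)
  obtain ⟨d, -, colon_component_le⟩ := hprime.inf_le'.1 inf_colon_component_le
  exact ⟨d, le_antisymm colon_component_le (le_colon_component d)⟩

theorem isHomogeneous_map_iterateFrobenius (p e : ℕ) [ExpChar R p] {I : Ideal R}
    (hI : I.IsHomogeneous 𝒜) : (I.map (iterateFrobenius R p e)).IsHomogeneous 𝒜 := by
  obtain ⟨s, rfl⟩ := (Ideal.IsHomogeneous.iff_exists 𝒜 I).1 hI
  rw [Ideal.map_span]
  refine Ideal.homogeneous_span 𝒜 _ ?_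
  rintro _ ⟨_, ⟨⟨r, i, hr⟩, -, rfl⟩, rfl⟩
  exact ⟨p ^ e • i, SetLike.pow_mem_graded _ hr⟩

end Graded

section FrobeniusPower

variable {I 𝔭 : Ideal (MvPolynomial (Fin n) K)}

theorem mem_Ass_iff : 𝔭 ∈ Ass I ↔ 𝔭.IsPrime ∧ ∃ f, I.colon {f} = 𝔭 :=
  isAssociatedPrime_quotient_iff

theorem exists_isHomogeneous_vnumLocal_colon_eq (hI : IsGraded I) (h𝔭 : IsGraded 𝔭)
    (hass : 𝔭 ∈ Ass I) :
    ∃ f : MvPolynomial (Fin n) K, f.IsHomogeneous (vnumLocal I 𝔭) ∧ I.colon {f} = 𝔭 := by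
  obtain ⟨hprime, f, hf⟩ := mem_Ass_iff.1 hass
  obtain ⟨d, hd⟩ := exists_colon_decompose_eq hI h𝔭 hf
  have degrees_nonempty : {d : ℕ | ∃ f : MvPolynomial (Fin n) K, f.IsHomogeneous d ∧
      I.colon (Ideal.span {f}) = 𝔭}.Nonempty :=
    ⟨d, _, (DirectSum.decompose (homogeneousSubmodule (Fin n) K) f d).2,
      Ideal.colon_span.trans hd⟩
  obtain ⟨f, hf, hcolon⟩ := Nat.sInf_mem degrees_nonempty
  exact ⟨f, hf, Ideal.colon_span.symm.trans hcolon⟩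

theorem vnumLocal_le_of_colon_eq {d : ℕ} {f : MvPolynomial (Fin n) K} (hf : f.IsHomogeneous d)
    (hcolon : I.colon {f} = 𝔭) : vnumLocal I 𝔭 ≤ d :=
  Nat.sInf_le ⟨f, hf, Ideal.colon_span.trans hcolon⟩

theorem vnum_le_vnumLocal (hI : IsGraded I) (h𝔭 : IsGraded 𝔭) (hass : 𝔭 ∈ Ass I) :
    vnum I ≤ vnumLocal I 𝔭 := by
  obtain ⟨f, hf, hcolon⟩ := exists_isHomogeneous_vnumLocal_colon_eq hI h𝔭 hass
  exact Nat.sInf_le ⟨f, hf, 𝔭, hass, Ideal.colon_span.trans hcolon⟩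

variable (p e : ℕ) [ExpChar K p]

theorem flat_iterateFrobenius : (iterateFrobenius (MvPolynomial (Fin n) K) p e).Flat :=
  flat_iterateFrobenius_mvPolynomial p e (RingHom.Flat.of_isField (Field.toIsField K) _)

variable (I) in
theorem frobPow_eq_map_iterateFrobenius :
    frobPow I (p ^ e) = I.map (iterateFrobenius (MvPolynomial (Fin n) K) p e) :=
  rfl

theorem isGraded_frobPow (hI : IsGraded I) : IsGraded (frobPow I (p ^ e)) :=
  isHomogeneous_map_iterateFrobenius p e hI

end FrobeniusPower

theorem isGraded_span_range {ι : Type*} {g : ι → MvPolynomial (Fin n) K} {dg : ι → ℕ}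
    (hg : ∀ i, (g i).IsHomogeneous (dg i)) : IsGraded (Ideal.span (Set.range g)) :=
  Ideal.homogeneous_span _ _ (Set.forall_mem_range.2 fun i => ⟨dg i, hg i⟩)

theorem stmt8_general {K : Type*} [Field K] {n : ℕ} (p e : ℕ) [ExpChar K p]
    {I 𝔭 : Ideal (MvPolynomial (Fin n) K)} (hI : IsGraded I) (h𝔭 : 𝔭 ∈ Ass I)
    {ι : Type*} [Fintype ι] {g : ι → MvPolynomial (Fin n) K} {dg : ι → ℕ}
    (hg : ∀ i, (g i).IsHomogeneous (dg i)) (hspan : 𝔭 = Ideal.span (Set.range g)) :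
    𝔭 ∈ Ass (frobPow I (p ^ e)) ∧
      vnumLocal (frobPow I (p ^ e)) 𝔭 ≤ p ^ e * vnumLocal I 𝔭 + (p ^ e - 1) * ∑ i, dg i := by
  have hprime : 𝔭.IsPrime := h𝔭.isPrime
  obtain ⟨f, hf, hfcolon⟩ :=
    exists_isHomogeneous_vnumLocal_colon_eq hI (hspan ▸ isGraded_span_range hg) h𝔭
  obtain ⟨a, ha, hcolon⟩ :=
    exists_map_iterateFrobenius_colon_eq (flat_iterateFrobenius p e) hfcolon hspan
  rw [← frobPow_eq_map_iterateFrobenius] at hcolon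
  refine ⟨mem_Ass_iff.2 ⟨hprime, _, hcolon⟩, ?_⟩
  have homogeneous : (f ^ p ^ e * ∏ i, g i ^ a i).IsHomogeneous
      (vnumLocal I 𝔭 * p ^ e + ∑ i, dg i * a i) :=
    (hf.pow _).mul (IsHomogeneous.prod _ _ _ fun i _ => (hg i).pow _)
  calc vnumLocal (frobPow I (p ^ e)) 𝔭
      ≤ vnumLocal I 𝔭 * p ^ e + ∑ i, dg i * a i := vnumLocal_le_of_colon_eq homogeneous hcolon
    _ ≤ vnumLocal I 𝔭 * p ^ e + ∑ i, dg i * (p ^ e - 1) := by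
        gcongr with i
        exact Nat.le_sub_one_of_lt (ha i)
    _ = p ^ e * vnumLocal I 𝔭 + (p ^ e - 1) * ∑ i, dg i := by
        rw [← Finset.sum_mul, mul_comm (vnumLocal I 𝔭), mul_comm (∑ i, dg i)]

theorem stmt8 {K : Type*} [Field K] {n : ℕ} (p : ℕ) (hp : p.Prime) [CharP K p]
    (I : Ideal (MvPolynomial (Fin n) K)) (hgr : IsGraded I) (htop : I ≠ ⊤) (hbot : I ≠ ⊥)
    (𝔭 : Ideal (MvPolynomial (Fin n) K)) (h𝔭 : 𝔭 ∈ Ass I)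
    (m : ℕ) (g : Fin m → MvPolynomial (Fin n) K) (dg : Fin m → ℕ)
    (hg : ∀ i, (g i).IsHomogeneous (dg i))
    (hspan : 𝔭 = Ideal.span (Set.range g))
    (hmin : ∀ s : Set (MvPolynomial (Fin n) K), s ⊂ Set.range g → Ideal.span s ≠ 𝔭)
    (q : ℕ) (hq : ∃ e : ℕ, q = p ^ e) (hq1 : 1 < q) :
    vnum (frobPow I q) ≤ q * vnumLocal I 𝔭 + (q - 1) * ∑ i, dg i := by
  obtain ⟨e, rfl⟩ := hq
  have : ExpChar K p := .prime hp
  obtain ⟨hass, hle⟩ := stmt8_general p e hgr h𝔭 hg hspan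
  have h𝔭gr : IsGraded 𝔭 := hspan ▸ isGraded_span_range hg
  exact (vnum_le_vnumLocal (isGraded_frobPow p e hgr) h𝔭gr hass).trans hle

end
end

section
/- Let S = K[x_1,…,x_n] be a standard graded polynomial ring over a field K of prime characteristic p, and let I ⊂ S be a proper nonzero unmixed monomial ideal. Then for all q = p^e > 1, v(I^{[q]}) = q·v(I) + (q−1)·height(I). -/
open MvPolynomial

attribute [local instance] MvPolynomial.gradedAlgebra

noncomputable section

variable {K : Type*} [Field K] {n : ℕ}

/-!
Let `P = (I : f)` be an associated prime of a monomial ideal `I`, with `f` chosen to have as few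
terms as possible. If a monomial `u ∉ P` multiplied some term `t` of `f` into `I`, then
`(I : u * (f - t)) = (I : u * f) = P` with fewer terms; hence `(I : x^m) ≤ P` for every monomial
`x^m` of `f`. Comparing leading terms, `P` is then monomial, so it is generated by variables `X i`,
`i ∈ A`, and has height `#A`. As `⨅ (I : x^m) ≤ (I : f) = P`, with `x^m` running over the
monomials of `f`, and `P` is prime and monomial, `P = (I : x^m)` for one of them. So v-numbers are
computed by monomials.

In characteristic `p`, the Frobenius power `I^{[q]}` of a monomial ideal is its extension along
`X i ↦ X i ^ q`, so that `x^b ∈ I^{[q]}` if and only if `x^⌊b/q⌋ ∈ I`. Consequently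
`(I^{[q]} : x^b) = P` if and only if `(I : x^⌊b/q⌋) = P` and `q ∣ b i + 1` for all `i ∈ A`. The
smallest such `b` with `⌊b/q⌋ = a` is `q • a + (q - 1) • ∑ i ∈ A, e_i`, of degree
`q * |a| + (q - 1) * height P`, and for an unmixed ideal `height P` does not depend on `P`.
-/

theorem colon_singleton_mul_of_notMem {A : Type*} [CommSemiring A] {I : Ideal A} {f s : A}
    (hP : (I.colon {f}).IsPrime) (hs : s ∉ I.colon {f}) : I.colon {s * f} = I.colon {f} := by
  ext g
  have h : g ∈ I.colon {s * f} ↔ g * s ∈ I.colon {f} := by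
    simp only [Submodule.mem_colon_singleton, smul_eq_mul, mul_assoc]
  exact h.trans
    ⟨fun hg => (hP.mem_or_mem hg).resolve_right hs, fun hg => Ideal.mul_mem_right _ _ hg⟩

theorem mem_associatedPrimes_quotient_iff {A : Type*} [CommRing A] [IsNoetherianRing A]
    {I P : Ideal A} : P ∈ associatedPrimes A (A ⧸ I) ↔ P.IsPrime ∧ ∃ f, I.colon {f} = P := by
  have h (f : A) : (⊥ : Submodule A (A ⧸ I)).colon {Ideal.Quotient.mk I f} = I.colon {f} := by
    ext g
    rw [Submodule.mem_colon_singleton, Submodule.mem_colon_singleton, Submodule.mem_bot,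
      smul_eq_mul, ← Ideal.Quotient.eq_zero_iff_mem, map_mul]
    rfl
  simp only [AssociatedPrimes.mem_iff, isAssociatedPrime_iff, Ideal.Quotient.mk_surjective.exists,
    h, eq_comm]

section MonomialIdeal

variable {σ R : Type*} [CommSemiring R] {I J : Ideal (MvPolynomial σ R)}

/-- Monomial ideals over an arbitrary coefficient semiring and set of variables; over `K` and
`Fin n` this is `IsMonomialIdeal`. -/
def IsMonomial (I : Ideal (MvPolynomial σ R)) : Prop :=
  ∃ s : Set (σ →₀ ℕ), I = Ideal.span ((fun a => monomial a (1 : R)) '' s)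

theorem monomial_mem_of_le {a b : σ →₀ ℕ} (hab : a ≤ b) (ha : monomial a (1 : R) ∈ I) (c : R) :
    monomial b c ∈ I :=
  I.mem_of_dvd (monomial_dvd_monomial.2 ⟨.inr hab, one_dvd c⟩) ha

open scoped Pointwise in
theorem card_support_monomial_mul_le (m : σ →₀ ℕ) (c : R) (f : MvPolynomial σ R) :
    (monomial m c * f).support.card ≤ f.support.card := by
  classical
  calc (monomial m c * f).support.card
    _ ≤ ((monomial m c).support + f.support).card := Finset.card_le_card (support_mul _ _)
    _ ≤ (monomial m c).support.card * f.support.card := Finset.card_add_le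
    _ ≤ ({m} : Finset (σ →₀ ℕ)).card * f.support.card := by
      gcongr
      exact support_monomial_subset
    _ = f.support.card := by rw [Finset.card_singleton, one_mul]

theorem mem_of_forall_monomial_mem {f : MvPolynomial σ R}
    (h : ∀ m ∈ f.support, monomial m (1 : R) ∈ I) : f ∈ I := by
  rw [f.as_sum]
  exact I.sum_mem fun m hm => monomial_mem_of_le le_rfl (h m hm) _

theorem isMonomial_iff :
    IsMonomial I ↔ ∀ f ∈ I, ∀ m ∈ f.support, monomial m (1 : R) ∈ I := by
  constructor
  · rintro ⟨s, rfl⟩ f hf m hm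
    obtain ⟨a, ha, ham⟩ := mem_ideal_span_monomial_image.1 hf m hm
    have hmem : monomial a (1 : R) ∈ Ideal.span ((fun a => monomial a (1 : R)) '' s) :=
      Ideal.subset_span (Set.mem_image_of_mem _ ha)
    exact monomial_mem_of_le ham hmem 1
  · intro h
    refine ⟨{m | monomial m (1 : R) ∈ I}, le_antisymm (fun f hf => ?_) (Ideal.span_le.2 ?_)⟩
    · refine mem_of_forall_monomial_mem fun m hm => Ideal.subset_span ?_
      exact Set.mem_image_of_mem _ (h f hf m hm)
    · rintro _ ⟨m, hm, rfl⟩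
      exact hm

theorem IsMonomial.monomial_mem (hI : IsMonomial I) {f : MvPolynomial σ R} (hf : f ∈ I)
    {m : σ →₀ ℕ} (hm : m ∈ f.support) : monomial m (1 : R) ∈ I :=
  isMonomial_iff.1 hI f hf m hm

theorem IsMonomial.le_iff (hI : IsMonomial I) :
    I ≤ J ↔ ∀ m, monomial m (1 : R) ∈ I → monomial m (1 : R) ∈ J :=
  ⟨fun h _ hm => h hm,
    fun h _ hf => mem_of_forall_monomial_mem fun m hm => h m (hI.monomial_mem hf hm)⟩

theorem IsMonomial.eq_iff (hI : IsMonomial I) (hJ : IsMonomial J) :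
    I = J ↔ ∀ m, monomial m (1 : R) ∈ I ↔ monomial m (1 : R) ∈ J := by
  simp only [le_antisymm_iff, hI.le_iff, hJ.le_iff, iff_iff_implies_and_implies, forall_and]

theorem monomial_mem_colon_monomial {a m : σ →₀ ℕ} :
    monomial m (1 : R) ∈ I.colon {monomial a (1 : R)} ↔ monomial (a + m) (1 : R) ∈ I := by
  rw [Submodule.mem_colon_singleton, smul_eq_mul, monomial_mul, one_mul, add_comm]

theorem IsMonomial.colon_monomial (hI : IsMonomial I) (a : σ →₀ ℕ) :
    IsMonomial (I.colon {monomial a (1 : R)}) := by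
  refine isMonomial_iff.2 fun f hf m hm => monomial_mem_colon_monomial.2 (hI.monomial_mem
    (Submodule.mem_colon_singleton.1 hf) ?_)
  rwa [mem_support_iff, smul_eq_mul, add_comm, coeff_mul_monomial, mul_one, ← mem_support_iff]

theorem inf_colon_monomial_le_colon (I : Ideal (MvPolynomial σ R)) (f : MvPolynomial σ R) :
    (f.support.inf fun m => I.colon {monomial m (1 : R)}) ≤ I.colon {f} := by
  intro g hg
  rw [Submodule.mem_finsetInf] at hg
  rw [Submodule.mem_colon_singleton, f.as_sum, Finset.smul_sum]
  refine I.sum_mem fun m hm => ?_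
  have hgm : g * monomial m (1 : R) ∈ I := Submodule.mem_colon_singleton.1 (hg m hm)
  have := I.mul_mem_left (C (f.coeff m)) hgm
  rwa [mul_left_comm, C_mul_monomial, mul_one] at this

theorem isMonomial_span_X_image (A : Set σ) :
    IsMonomial (Ideal.span (X '' A : Set (MvPolynomial σ R))) :=
  ⟨(fun i => Finsupp.single i 1) '' A, by rw [Set.image_image]; rfl⟩

theorem monomial_mem_span_X_image_iff [Nontrivial R] {A : Set σ} {m : σ →₀ ℕ} :
    monomial m (1 : R) ∈ Ideal.span (X '' A : Set (MvPolynomial σ R)) ↔ ∃ i ∈ A, m i ≠ 0 := by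
  classical
  simp [mem_ideal_span_X_image, support_monomial]

theorem IsMonomial.colon_monomial_eq_span_X_image_iff [Nontrivial R] (hI : IsMonomial I)
    {a : σ →₀ ℕ} {A : Set σ} :
    I.colon {monomial a (1 : R)} = Ideal.span (X '' A) ↔
      ∀ m, monomial (a + m) (1 : R) ∈ I ↔ ∃ i ∈ A, m i ≠ 0 := by
  simp only [(hI.colon_monomial a).eq_iff (isMonomial_span_X_image A), monomial_mem_colon_monomial,
    monomial_mem_span_X_image_iff]

theorem IsMonomial.exists_eq_span_X_image (hI : IsMonomial I) (hprime : I.IsPrime) :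
    ∃ A : Set σ, I = Ideal.span (X '' A) := by
  refine ⟨{i | X i ∈ I}, le_antisymm (hI.le_iff.2 fun m hm => ?_) ?_⟩
  · rw [monomial_eq, C_1, one_mul] at hm
    obtain ⟨i, hi, hXi⟩ := (Ideal.IsPrime.prod_mem_iff (p := I)).1 hm
    have hX : (X i : MvPolynomial σ R) ∈ Ideal.span (X '' {i | X i ∈ I}) :=
      Ideal.subset_span ⟨i, hprime.mem_of_pow_mem _ hXi, rfl⟩
    exact monomial_mem_of_le (Finsupp.single_le_iff.2
      (Nat.one_le_iff_ne_zero.2 (Finsupp.mem_support_iff.1 hi))) hX 1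
  · rw [Ideal.span_le]
    rintro _ ⟨i, hi, rfl⟩
    exact hi

end MonomialIdeal

section SpanVariables

variable {σ R : Type*} [CommRing R]

theorem span_X_image_eq_ker_killCompl (A : Set σ) :
    Ideal.span (X '' A : Set (MvPolynomial σ R)) =
      RingHom.ker (killCompl (R := R) (Subtype.val_injective (p := (· ∉ A)))) := by
  refine le_antisymm (Ideal.span_le.2 ?_) fun f hf => mem_ideal_span_X_image.2 fun m hm => ?_
  · rintro _ ⟨i, hi, rfl⟩
    simp [killCompl, hi]
  · by_contra! hA
    have hsub : (m.support : Set σ) ⊆ Set.range (Subtype.val : {i // i ∉ A} → σ) := by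
      intro i hi
      exact ⟨⟨i, fun hiA => Finsupp.mem_support_iff.1 hi (hA i hiA)⟩, rfl⟩
    rw [mem_support_iff, ← m.mapDomain_comapDomain _ Subtype.val_injective hsub,
      ← coeff_killCompl Subtype.val_injective, (RingHom.mem_ker).1 hf] at hm
    exact hm (coeff_zero _)

variable [IsDomain R]

theorem isPrime_span_X_image (A : Set σ) :
    (Ideal.span (X '' A : Set (MvPolynomial σ R))).IsPrime :=
  span_X_image_eq_ker_killCompl (R := R) A ▸ RingHom.ker_isPrime _

theorem height_span_X_image [Finite σ] [IsNoetherianRing R] (A : Finset σ) :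
    (Ideal.span (X '' (A : Set σ) : Set (MvPolynomial σ R))).height = A.card := by
  classical
  apply le_antisymm
  · have hprime := isPrime_span_X_image (R := R) (A : Set σ)
    rw [← Finset.coe_image] at hprime ⊢
    refine (Ideal.height_le_card_of_mem_minimalPrimes_span_finset
      (s := A.image (X : σ → MvPolynomial σ R)) ?_).trans (mod_cast Finset.card_image_le)
    rw [Ideal.minimalPrimes_eq_subsingleton_self]
    exact Set.mem_singleton _
  · induction A using Finset.induction_on with
    | empty => simp
    | insert i A hi ih =>
      have := isPrime_span_X_image (R := R) (A : Set σ)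
      have := isPrime_span_X_image (R := R) ((insert i A : Finset σ) : Set σ)
      have hlt : Ideal.span (X '' (A : Set σ) : Set (MvPolynomial σ R)) <
          Ideal.span (X '' (insert i A : Finset σ)) := by
        refine lt_of_le_of_ne (Ideal.span_mono (Set.image_mono (by simp))) fun heq => ?_
        have hXi : (X i : MvPolynomial σ R) ∈ Ideal.span (X '' (A : Set σ)) :=
          heq ▸ Ideal.subset_span ⟨i, by simp, rfl⟩
        obtain ⟨j, hj, hij⟩ := monomial_mem_span_X_image_iff.1 hXi
        exact hi ((Finsupp.single_apply_ne_zero.1 hij).1 ▸ hj)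
      calc ((insert i A).card : ℕ∞)
        _ = A.card + 1 := by rw [Finset.card_insert_of_notMem hi, Nat.cast_succ]
        _ ≤ (Ideal.span (X '' (A : Set σ) : Set (MvPolynomial σ R))).height + 1 := by gcongr
        _ ≤ _ := Ideal.height_add_one_le_of_lt_of_isPrime hlt

end SpanVariables

section AssociatedPrimes

variable {σ R : Type*} [CommRing R] {I : Ideal (MvPolynomial σ R)}

theorem nonempty_monomialOrder.{u} (σ : Type u) : Nonempty (MonomialOrder.{u, u} σ) := by
  obtain ⟨_, _⟩ := exists_wellFoundedLT σ
  exact ⟨MonomialOrder.lex (σ := σᵒᵈ)⟩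

theorem card_support_sub_monomial_lt {f : MvPolynomial σ R} {m : σ →₀ ℕ}
    (hm : m ∈ f.support) :
    (f - monomial m (f.coeff m)).support.card < f.support.card := by
  classical
  refine Finset.card_lt_card (Finset.ssubset_iff_subset_ne.2 ⟨fun a ha => ?_, fun heq => ?_⟩)
  · rw [mem_support_iff, coeff_sub, coeff_monomial] at ha
    split_ifs at ha with h
    · exact h ▸ hm
    · simpa using ha
  · rw [← heq, mem_support_iff, coeff_sub, coeff_monomial, if_pos rfl, sub_self] at hm
    exact hm rfl

theorem isMonomial_of_monomial_degree_mem (ord : MonomialOrder σ)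
    {P : Ideal (MvPolynomial σ R)}
    (hP : ∀ g ∈ P, g ≠ 0 → monomial (ord.degree g) (1 : R) ∈ P) : IsMonomial P := by
  classical
  refine isMonomial_iff.2 fun g hg => ?_
  induction hk : g.support.card using Nat.strong_induction_on generalizing g with
  | _ k ih =>
    intro m hm
    have hg0 : g ≠ 0 := by rintro rfl; simp at hm
    set d := ord.degree g
    have hd : monomial d (1 : R) ∈ P := hP g hg hg0
    obtain rfl | hmd := eq_or_ne m d
    · exact hd
    · refine ih _ (hk ▸ card_support_sub_monomial_lt (ord.degree_mem_support hg0)) _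
        (P.sub_mem hg (monomial_mem_of_le le_rfl hd _)) rfl m ?_
      rwa [mem_support_iff, coeff_sub, coeff_monomial, if_neg hmd.symm, sub_zero,
        ← mem_support_iff]

theorem IsMonomial.colon_monomial_le_of_minimalFor {P : Ideal (MvPolynomial σ R)}
    (hI : IsMonomial I) (hP : P.IsPrime) {f : MvPolynomial σ R}
    (hf : MinimalFor (fun f => I.colon {f} = P) (fun f => f.support.card) f)
    {m : σ →₀ ℕ} (hm : m ∈ f.support) : I.colon {monomial m (1 : R)} ≤ P := by
  obtain ⟨rfl, hmin⟩ := hf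
  refine (hI.colon_monomial m).le_iff.2 fun u hu => ?_
  by_contra huf
  set f' := f - monomial m (f.coeff m)
  have hterm : monomial u (1 : R) * monomial m (f.coeff m) ∈ I := by
    rw [monomial_mul, one_mul, add_comm]
    exact monomial_mem_of_le le_rfl (monomial_mem_colon_monomial.1 hu) _
  have hcolon : I.colon {monomial u (1 : R) * f'} = I.colon {f} := by
    rw [← colon_singleton_mul_of_notMem hP huf]
    ext g
    simp only [Submodule.mem_colon_singleton, smul_eq_mul, f', mul_sub]
    exact I.sub_mem_iff_left (I.mul_mem_left g hterm)
  have hcard : (monomial u (1 : R) * f').support.card < f.support.card :=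
    (card_support_monomial_mul_le u 1 f').trans_lt (card_support_sub_monomial_lt hm)
  exact hcard.not_ge (hmin hcolon hcard.le)

variable [IsDomain R]

theorem IsMonomial.colon_of_isPrime (hI : IsMonomial I) {f : MvPolynomial σ R}
    (hP : (I.colon {f}).IsPrime) : IsMonomial (I.colon {f}) := by
  obtain ⟨ord⟩ := nonempty_monomialOrder σ
  obtain ⟨f₀, hf₀⟩ := exists_minimalFor_of_wellFoundedLT (fun h => I.colon {h} = I.colon {f})
    (fun h => h.support.card) ⟨f, rfl⟩
  have hne : f₀ ≠ 0 := by
    rintro rfl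
    exact hP.ne_top (hf₀.prop.symm.trans Submodule.colon_singleton_zero)
  refine isMonomial_of_monomial_degree_mem ord fun g hg hg0 => ?_
  apply hI.colon_monomial_le_of_minimalFor hP hf₀ (ord.degree_mem_support hne)
  have hgf : g * f₀ ∈ I := Submodule.mem_colon_singleton.1 (hf₀.prop.symm ▸ hg)
  rw [monomial_mem_colon_monomial, add_comm, ← MonomialOrder.degree_mul hg0 hne]
  exact hI.monomial_mem hgf (ord.degree_mem_support (mul_ne_zero hg0 hne))

theorem IsMonomial.exists_colon_monomial_eq (hI : IsMonomial I) {f : MvPolynomial σ R}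
    (hP : (I.colon {f}).IsPrime) :
    ∃ m ∈ f.support, I.colon {monomial m (1 : R)} = I.colon {f} := by
  obtain ⟨m, hm, hle⟩ := hP.inf_le'.1 (inf_colon_monomial_le_colon I f)
  refine ⟨m, hm, le_antisymm hle ((hI.colon_of_isPrime hP).le_iff.2 fun u hu => ?_)⟩
  rw [monomial_mem_colon_monomial, add_comm]
  refine hI.monomial_mem (Submodule.mem_colon_singleton.1 hu) ?_
  rwa [mem_support_iff, smul_eq_mul, coeff_monomial_mul, one_mul, ← mem_support_iff]

theorem IsMonomial.mem_associatedPrimes_iff [Finite σ] [IsNoetherianRing R] (hI : IsMonomial I)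
    {P : Ideal (MvPolynomial σ R)} :
    P ∈ associatedPrimes (MvPolynomial σ R) (MvPolynomial σ R ⧸ I) ↔
      P.IsPrime ∧ ∃ a, I.colon {monomial a (1 : R)} = P := by
  rw [mem_associatedPrimes_quotient_iff]
  refine and_congr_right fun hP => ⟨?_, fun ⟨a, ha⟩ => ⟨_, ha⟩⟩
  rintro ⟨f, rfl⟩
  obtain ⟨a, -, ha⟩ := hI.exists_colon_monomial_eq hP
  exact ⟨a, ha⟩

end AssociatedPrimes

section FrobLift

variable {σ : Type*} {q : ℕ} {A : Finset σ}

/-- The exponent of `(x^a)^q * ∏ i ∈ A, X i ^ (q - 1)`: the smallest exponent with quotient `a`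
by `q` all of whose entries in `A` are `-1` modulo `q`. It is the exponent of a monomial of least
degree computing the local v-number of `I^{[q]}` when `x^a` is one computing that of `I`. -/
def frobLift (q : ℕ) (A : Finset σ) (a : σ →₀ ℕ) : σ →₀ ℕ :=
  q • a + ∑ i ∈ A, Finsupp.single i (q - 1)

theorem frobLift_apply [DecidableEq σ] (a : σ →₀ ℕ) (i : σ) :
    frobLift q A a i = q * a i + if i ∈ A then q - 1 else 0 := by
  simp only [frobLift, Finsupp.add_apply, Finsupp.smul_apply, smul_eq_mul,
    Finsupp.finsetSum_apply, Finsupp.single_apply, Finset.sum_ite_eq']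

theorem degree_frobLift (a : σ →₀ ℕ) :
    (frobLift q A a).degree = q * a.degree + (q - 1) * A.card := by
  simp only [frobLift, map_add, map_sum, Finsupp.degree_single, Finset.sum_const, smul_eq_mul,
    mul_comm, map_nsmul]

theorem frobLift_floorDiv (hq : 0 < q) (a : σ →₀ ℕ) : frobLift q A a ⌊/⌋ q = a := by
  classical
  ext i
  rw [Finsupp.floorDiv_apply, Nat.floorDiv_eq_div, frobLift_apply, Nat.mul_add_div hq]
  split_ifs
  · rw [Nat.div_eq_of_lt (Nat.sub_one_lt hq.ne'), add_zero]
  · rw [Nat.zero_div, add_zero]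

theorem dvd_frobLift_apply_add_one (hq : 0 < q) (a : σ →₀ ℕ) {i : σ} (hi : i ∈ A) :
    q ∣ frobLift q A a i + 1 := by
  classical
  rw [frobLift_apply, if_pos hi, add_assoc, Nat.sub_add_cancel hq]
  exact (dvd_mul_right q _).add (dvd_refl q)

theorem frobLift_floorDiv_le {b : σ →₀ ℕ} (hb : ∀ i ∈ A, q ∣ b i + 1) :
    frobLift q A (b ⌊/⌋ q) ≤ b := by
  classical
  intro i
  rw [frobLift_apply, Finsupp.floorDiv_apply, Nat.floorDiv_eq_div]
  split_ifs with hi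
  · have hmul : q * (b i / q) + q = b i + 1 := by
      rw [← Nat.mul_add_one, ← Nat.succ_div_of_dvd (hb i hi), Nat.mul_div_cancel' (hb i hi)]
    have hq : 1 ≤ q := Nat.pos_of_dvd_of_pos (hb i hi) (Nat.succ_pos _)
    rw [← Nat.add_sub_assoc hq, hmul, Nat.add_sub_cancel]
  · exact Nat.mul_div_le _ _

end FrobLift

section MapExpand

variable {σ R : Type*} [CommSemiring R] {I : Ideal (MvPolynomial σ R)} {q : ℕ}

theorem IsMonomial.map_expand (hI : IsMonomial I) (q : ℕ) :
    IsMonomial (I.map (expand q)) := by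
  obtain ⟨s, rfl⟩ := hI
  refine ⟨(q • ·) '' s, ?_⟩
  simp only [Ideal.map_span, Set.image_image, expand_monomial]

theorem IsMonomial.monomial_mem_map_expand_iff [Nontrivial R] (hI : IsMonomial I) (hq : 0 < q)
    {m : σ →₀ ℕ} : monomial m (1 : R) ∈ I.map (expand q) ↔
      monomial (m ⌊/⌋ q) (1 : R) ∈ I := by
  classical
  obtain ⟨s, rfl⟩ := hI
  simp only [Ideal.map_span, Set.image_image, expand_monomial]
  rw [← Set.image_image (fun a => monomial a (1 : R)) (q • ·) s]
  simp only [mem_ideal_span_monomial_image, support_monomial, if_neg one_ne_zero,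
    Finset.mem_singleton, forall_eq, Set.exists_mem_image, le_floorDiv_iff_smul_le hq]

theorem add_div_eq_div_iff_of_dvd_add_one {q b c : ℕ} (hb : q ∣ b + 1) :
    (b + c) / q = b / q ↔ c = 0 := by
  refine ⟨fun h => ?_, by rintro rfl; rfl⟩
  by_contra hc
  have hle : (b + 1) / q ≤ (b + c) / q := Nat.div_le_div_right (by omega)
  rw [h, Nat.succ_div_of_dvd hb] at hle
  omega

variable [Nontrivial R]

theorem IsMonomial.colon_monomial_map_expand_eq_iff (hI : IsMonomial I) (hq : 0 < q)
    {b : σ →₀ ℕ} {A : Set σ} :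
    (I.map (expand q)).colon {monomial b (1 : R)} = Ideal.span (X '' A) ↔
      I.colon {monomial (b ⌊/⌋ q) (1 : R)} = Ideal.span (X '' A) ∧ ∀ i ∈ A, q ∣ b i + 1 := by
  simp only [(hI.map_expand q).colon_monomial_eq_span_X_image_iff,
    hI.colon_monomial_eq_span_X_image_iff, hI.monomial_mem_map_expand_iff hq]
  constructor
  · intro h
    have hbase (m : σ →₀ ℕ) :
        monomial (b ⌊/⌋ q + m) (1 : R) ∈ I ↔ ∃ i ∈ A, m i ≠ 0 := by
      have hfloor : (b + q • m) ⌊/⌋ q = b ⌊/⌋ q + m := by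
        ext i
        simp [Finsupp.floorDiv_apply, Nat.add_mul_div_left _ _ hq]
      simpa [hfloor, hq.ne'] using h (q • m)
    refine ⟨hbase, fun i hi => ?_⟩
    by_contra hdvd
    have hfloor : (b + Finsupp.single i 1) ⌊/⌋ q = b ⌊/⌋ q := by
      ext j
      obtain rfl | hji := eq_or_ne j i
      · simp [Finsupp.floorDiv_apply, Nat.succ_div_of_not_dvd hdvd]
      · simp [Finsupp.floorDiv_apply, Finsupp.single_eq_of_ne hji]
    have hmem : monomial ((b + Finsupp.single i 1) ⌊/⌋ q) (1 : R) ∈ I :=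
      (h _).2 ⟨i, hi, by simp⟩
    have hnotMem : monomial (b ⌊/⌋ q) (1 : R) ∉ I := by simpa using (hbase 0).1
    exact hnotMem (hfloor ▸ hmem)
  · rintro ⟨h, hdvd⟩ m
    have hfloor : (b + m) ⌊/⌋ q = b ⌊/⌋ q + ((b + m) ⌊/⌋ q - b ⌊/⌋ q) :=
      (add_tsub_cancel_of_le ((gc_floorDiv_smul hq).monotone_u le_self_add)).symm
    rw [hfloor, h]
    refine exists_congr fun i => and_congr_right fun hi => not_congr ?_
    rw [← add_div_eq_div_iff_of_dvd_add_one (c := m i) (hdvd i hi), Finsupp.tsub_apply,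
      tsub_eq_zero_iff_le]
    exact (Nat.div_le_div_right le_self_add).ge_iff_eq'

theorem IsMonomial.colon_monomial_frobLift_map_expand (hI : IsMonomial I) (hq : 0 < q)
    {a : σ →₀ ℕ} {A : Finset σ} (ha : I.colon {monomial a (1 : R)} = Ideal.span (X '' A)) :
    (I.map (expand q)).colon {monomial (frobLift q A a) (1 : R)} = Ideal.span (X '' A) :=
  (hI.colon_monomial_map_expand_eq_iff hq).2
    ⟨(frobLift_floorDiv hq a).symm ▸ ha, fun _ => dvd_frobLift_apply_add_one hq a⟩

theorem IsMonomial.isLeast_degree_colon_map_expand (hI : IsMonomial I) (hq : 0 < q)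
    {A : Finset σ} {d : ℕ}
    (hd : IsLeast (Finsupp.degree '' {a | I.colon {monomial a (1 : R)} = Ideal.span (X '' A)}) d) :
    IsLeast (Finsupp.degree ''
        {b | (I.map (expand q)).colon {monomial b (1 : R)} = Ideal.span (X '' A)})
      (q * d + (q - 1) * A.card) := by
  obtain ⟨⟨a, ha, rfl⟩, hmin⟩ := hd
  refine ⟨⟨frobLift q A a, hI.colon_monomial_frobLift_map_expand hq ha, degree_frobLift a⟩, ?_⟩
  rintro _ ⟨b, hb, rfl⟩
  obtain ⟨hcolon, hdvd⟩ := (hI.colon_monomial_map_expand_eq_iff hq).1 hb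
  calc q * a.degree + (q - 1) * A.card
    _ ≤ q * (b ⌊/⌋ q).degree + (q - 1) * A.card := by gcongr; exact hmin ⟨_, hcolon, rfl⟩
    _ = (frobLift q A (b ⌊/⌋ q)).degree := (degree_frobLift _).symm
    _ ≤ b.degree := Finsupp.degree_mono (frobLift_floorDiv_le hdvd)

end MapExpand

section VNumber

variable {I P : Ideal (MvPolynomial (Fin n) K)} {q : ℕ}

theorem exists_isHomogeneous_colon_eq_iff (hI : IsMonomial I) (hP : P.IsPrime) {d : ℕ} :
    (∃ f : MvPolynomial (Fin n) K, f.IsHomogeneous d ∧ I.colon (Ideal.span {f}) = P) ↔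
      ∃ a, I.colon {monomial a (1 : K)} = P ∧ a.degree = d := by
  simp only [Ideal.colon_span]
  constructor
  · rintro ⟨f, hf, rfl⟩
    obtain ⟨a, ha, hcolon⟩ := hI.exists_colon_monomial_eq hP
    refine ⟨a, hcolon, ?_⟩
    rw [Finsupp.degree_eq_weight_one]
    exact hf (mem_support_iff.1 ha)
  · rintro ⟨a, ha, rfl⟩
    exact ⟨_, isHomogeneous_monomial 1 rfl, ha⟩

theorem isLeast_vnumLocal (hI : IsMonomial I) (hP : P ∈ Ass I) :
    IsLeast (Finsupp.degree '' {a | I.colon {monomial a (1 : K)} = P}) (vnumLocal I P) := by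
  obtain ⟨hprime, hne⟩ := hI.mem_associatedPrimes_iff.1 hP
  have h : vnumLocal I P = sInf (Finsupp.degree '' {a | I.colon {monomial a (1 : K)} = P}) :=
    congrArg sInf (Set.ext fun d => exists_isHomogeneous_colon_eq_iff hI hprime)
  rw [h]
  exact isLeast_csInf (Set.Nonempty.image _ hne)

theorem isLeast_vnum (hI : IsMonomial I) (hne : (Ass I).Nonempty) :
    IsLeast (vnumLocal I '' Ass I) (vnum I) := by
  have hlocal {P} (hP : P ∈ Ass I) : ∃ f : MvPolynomial (Fin n) K,
      f.IsHomogeneous (vnumLocal I P) ∧ I.colon (Ideal.span {f}) = P :=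
    (exists_isHomogeneous_colon_eq_iff hI hP.1).2 (isLeast_vnumLocal hI hP).1
  have hle {P} (hP : P ∈ Ass I) : vnum I ≤ vnumLocal I P := by
    obtain ⟨f, hf, hfP⟩ := hlocal hP
    exact Nat.sInf_le ⟨f, hf, P, hP, hfP⟩
  refine ⟨?_, Set.forall_mem_image.2 fun P hP => hle hP⟩
  have hmem : vnum I ∈ {d | ∃ f : MvPolynomial (Fin n) K, f.IsHomogeneous d ∧
      ∃ P ∈ Ass I, I.colon (Ideal.span {f}) = P} := by
    obtain ⟨P, hP⟩ := hne
    obtain ⟨f, hf, hfP⟩ := hlocal hP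
    exact Nat.sInf_mem ⟨_, f, hf, P, hP, hfP⟩
  obtain ⟨f, hf, P, hP, hfP⟩ := hmem
  exact ⟨P, hP, le_antisymm (Nat.sInf_le ⟨f, hf, hfP⟩) (hle hP)⟩

theorem ass_map_expand (hI : IsMonomial I) (hq : 0 < q) : Ass (I.map (expand q)) = Ass I := by
  ext P
  rw [Ass, Ass, (hI.map_expand q).mem_associatedPrimes_iff, hI.mem_associatedPrimes_iff]
  refine and_congr_right fun hP => ⟨?_, ?_⟩
  · rintro ⟨b, rfl⟩
    obtain ⟨A, hA⟩ := ((hI.map_expand q).colon_monomial b).exists_eq_span_X_image hP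
    rw [hA]
    exact ⟨_, ((hI.colon_monomial_map_expand_eq_iff hq).1 hA).1⟩
  · rintro ⟨a, rfl⟩
    obtain ⟨A, hA⟩ := (hI.colon_monomial a).exists_eq_span_X_image hP
    lift A to Finset (Fin n) using A.toFinite
    rw [hA]
    exact ⟨_, hI.colon_monomial_frobLift_map_expand hq hA⟩

theorem vnumLocal_map_expand (hI : IsMonomial I) (hq : 0 < q) (hP : P ∈ Ass I) :
    (vnumLocal (I.map (expand q)) P : ℕ∞) = q * vnumLocal I P + (q - 1 : ℕ) * P.height := by
  have hleast := isLeast_vnumLocal hI hP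
  have hleast' := isLeast_vnumLocal (hI.map_expand q) (ass_map_expand hI hq ▸ hP)
  obtain ⟨hprime, a, rfl⟩ := hI.mem_associatedPrimes_iff.1 hP
  obtain ⟨A, hA⟩ := (hI.colon_monomial a).exists_eq_span_X_image hprime
  lift A to Finset (Fin n) using A.toFinite
  rw [hA] at hleast hleast' ⊢
  rw [height_span_X_image]
  exact mod_cast hleast'.unique (hI.isLeast_degree_colon_map_expand hq hleast)

theorem height_le_of_ne_top (hI : I ≠ ⊤) : I.height ≤ n := by
  have h := Ideal.height_le_ringKrullDim_of_ne_top hI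
  rw [MvPolynomial.ringKrullDim_of_isNoetherianRing, ringKrullDim_eq_zero_of_field, zero_add,
    Nat.card_fin] at h
  exact_mod_cast h

theorem height_eq_heightI (hunm : heightI I = bightI I) (hP : P ∈ Ass I) :
    P.height = heightI I := by
  set s := {h : ℕ | ∃ 𝔭 ∈ Ass I, ∃ h𝔭 : 𝔭.IsPrime,
    Order.height (⟨𝔭, h𝔭⟩ : PrimeSpectrum (MvPolynomial (Fin n) K)) = (h : ℕ∞)}
  have hbdd : BddAbove s := by
    refine ⟨n, ?_⟩
    rintro h ⟨𝔭, -, h𝔭, hh⟩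
    have := height_le_of_ne_top h𝔭.ne_top
    rwa [PrimeSpectrum.height_eq_orderHeight ⟨𝔭, h𝔭⟩, hh, Nat.cast_le] at this
  have hprime : P.IsPrime := hP.1
  obtain ⟨h, hh⟩ := ENat.ne_top_iff_exists.1 (Ideal.height_ne_top hprime.ne_top)
  have hmem : h ∈ s := ⟨P, hP, hprime, by rw [← PrimeSpectrum.height_eq_orderHeight, hh]⟩
  rw [← hh, Nat.cast_inj]
  exact le_antisymm ((le_csSup hbdd hmem).trans_eq hunm.symm) (Nat.sInf_le hmem)

theorem vnum_map_expand (hI : IsMonomial I) (htop : I ≠ ⊤) (hunm : heightI I = bightI I)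
    (hq : 0 < q) : vnum (I.map (expand q)) = q * vnum I + (q - 1) * heightI I := by
  have : Nontrivial (MvPolynomial (Fin n) K ⧸ I) := Ideal.Quotient.nontrivial_iff.2 htop
  have hne : (Ass I).Nonempty := associatedPrimes.nonempty _ _
  have hass := ass_map_expand hI hq
  have hlocal (P) (hP : P ∈ Ass I) :
      vnumLocal (I.map (expand q)) P = q * vnumLocal I P + (q - 1) * heightI I := by
    have := vnumLocal_map_expand hI hq hP
    rw [height_eq_heightI hunm hP] at this
    exact_mod_cast this
  have hmono : Monotone fun d => q * d + (q - 1) * heightI I := fun _ _ _ => by dsimp only; gcongr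
  have hleast := hmono.map_isLeast (isLeast_vnum hI hne)
  rw [Set.image_image] at hleast
  have hleast' := isLeast_vnum (hI.map_expand q) (hass ▸ hne)
  rw [hass, Set.image_congr hlocal] at hleast'
  exact hleast'.unique hleast

theorem frobPow_eq_map_expand {p : ℕ} [ExpChar K p] (hI : IsMonomial I) (e : ℕ) :
    frobPow I (p ^ e) = I.map (expand (p ^ e)) := by
  apply le_antisymm
  · refine Ideal.span_le.2 (Set.image_subset_iff.2 fun f hf => ?_)
    change f ^ p ^ e ∈ I.map (expand (p ^ e))
    rw [f.as_sum, sum_pow_char_pow]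
    refine Ideal.sum_mem _ fun m hm => ?_
    rw [monomial_pow]
    refine monomial_mem_of_le le_rfl ?_ _
    rw [← expand_monomial]
    exact Ideal.mem_map_of_mem _ (hI.monomial_mem hf hm)
  · obtain ⟨s, rfl⟩ := hI
    rw [Ideal.map_span, Ideal.span_le]
    rintro _ ⟨_, ⟨a, ha, rfl⟩, rfl⟩
    refine Ideal.subset_span ⟨_, Ideal.subset_span ⟨a, ha, rfl⟩, ?_⟩
    simp [monomial_pow]

end VNumber

theorem stmt11 {K : Type*} [Field K] {n : ℕ} (p : ℕ) (hp : p.Prime) [CharP K p]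
    (I : Ideal (MvPolynomial (Fin n) K)) (hmon : IsMonomialIdeal I) (htop : I ≠ ⊤) (hbot : I ≠ ⊥)
    (hunm : heightI I = bightI I)
    (q : ℕ) (hq : ∃ e : ℕ, q = p ^ e) (hq1 : 1 < q) :
    vnum (frobPow I q) = q * vnum I + (q - 1) * heightI I := by
  obtain ⟨e, rfl⟩ := hq
  have := ExpChar.prime (R := K) hp
  have hI : IsMonomial I := hmon
  rw [frobPow_eq_map_expand hI e]
  exact vnum_map_expand hI htop hunm (pow_pos hp.pos e)

end
end
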